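/- Let c > 0 with 1/c an integer, let n ≥ 1 be an integer, and set ε = 2^{−2^{2n}}. If G is an ε-sparse (ε|G|^{1−c}, ε|G|)-coherent graph with at least two vertices, then G contains a spider of length n and height at most 2 + 2/c, with mass at least ε|G|: that is, there exist a vertex a and coverings (a, H_1, B_1), …, (a, H_n, B_n), all with apex a, each of height at most 2 + 2/c and with |B_i| ≥ ε|G|, such that the sets H_i∖{a} are pairwise disjoint and pairwise anticomplete. -/

import Mathlib

/-- Two vertex sets are anticomplete: no edges between them. -/
def Anticomplete {V : Type} (G : SimpleGraph V) (A B : Finset V) : Prop :=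
  ∀ a ∈ A, ∀ b ∈ B, ¬ G.Adj a b

/-- A covering (a, H, B) in G: H, B disjoint, a ∈ H, G[H] connected,
and every vertex of B has a neighbour in H. -/
def IsCovering {V : Type} (G : SimpleGraph V) (a : V) (H B : Finset V) : Prop :=
  Disjoint H B ∧ a ∈ H ∧ (SimpleGraph.induce (↑H : Set V) G).Connected ∧
    ∀ b ∈ B, ∃ h ∈ H, G.Adj h b

/-- The covering with apex a and heart H has height at most r: every vertex of H is
joined to a by a path of G[H] of length at most r - 1. -/
def HeightLE {V : Type} (G : SimpleGraph V) (a : V) (H : Finset V) (r : ℝ) : Prop :=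
  ∀ v ∈ H, ∃ p : G.Walk a v, p.IsPath ∧ (∀ x ∈ p.support, x ∈ H) ∧ (p.length : ℝ) ≤ r - 1

open Classical in
/-- Vertices having a neighbour in `H`. -/
noncomputable def nb {V : Type} [Fintype V] (G : SimpleGraph V) (H : Finset V) : Finset V :=
  Finset.univ.filter (fun v => ∃ h ∈ H, G.Adj h v)

/-- `H` is connected with root `v` and depth at most `r`, as witnessed by `f`. -/
def Rooted {V : Type} (G : SimpleGraph V) (v : V) (H : Finset V) (f : V → ℕ) (r : ℕ) : Prop :=
  v ∈ H ∧ (∀ u ∈ H, f u ≤ r) ∧ ∀ u ∈ H, u ≠ v → ∃ w ∈ H, G.Adj w u ∧ f w < f u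

lemma mem_nb {V : Type} [Fintype V] (G : SimpleGraph V) (H : Finset V) (v : V) :
    v ∈ nb G H ↔ ∃ h ∈ H, G.Adj h v := by
  simp [nb]

lemma rooted_walk {V : Type} (G : SimpleGraph V) (v : V) (H : Finset V) (f : V → ℕ) (r : ℕ)
    (h : Rooted G v H f r) :
    ∀ u ∈ H, ∃ p : G.Walk v u, (∀ x ∈ p.support, x ∈ H) ∧ p.length ≤ r := by
  obtain ⟨hv, hr, hp⟩ := h
  have key : ∀ m : ℕ, ∀ u ∈ H, f u ≤ m →
      ∃ p : G.Walk v u, (∀ x ∈ p.support, x ∈ H) ∧ p.length ≤ f u := by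
    intro m
    induction m with
    | zero =>
      intro u hu hm
      by_cases huv : u = v
      · subst huv
        exact ⟨SimpleGraph.Walk.nil, by simpa using hu, by simp⟩
      · obtain ⟨w, _, _, hlt⟩ := hp u hu huv
        omega
    | succ m ih =>
      intro u hu hm
      by_cases huv : u = v
      · subst huv
        exact ⟨SimpleGraph.Walk.nil, by simpa using hu, by simp⟩
      · obtain ⟨w, hw, hadj, hlt⟩ := hp u hu huv
        obtain ⟨p, hps, hpl⟩ := ih w hw (by omega)
        refine ⟨p.concat hadj, ?_, ?_⟩
        · intro x hx
          rw [SimpleGraph.Walk.support_concat] at hx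
          simp at hx
          rcases hx with hx | hx
          · exact hps x hx
          · exact hx ▸ hu
        · rw [SimpleGraph.Walk.length_concat]; omega
  intro u hu
  obtain ⟨p, h1, h2⟩ := key (f u) u hu le_rfl
  exact ⟨p, h1, h2.trans (hr u hu)⟩

/-- Removing a deepest vertex. -/
lemma rooted_erase {V : Type} [DecidableEq V] (G : SimpleGraph V) (v : V) (H : Finset V)
    (f : V → ℕ) (r : ℕ) (h : Rooted G v H f r) (hne : H ≠ {v}) :
    ∃ x ∈ H, Rooted G v (H.erase x) f r := by
  obtain ⟨hv, hr, hp⟩ := h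
  have hne' : (H.erase v).Nonempty := by
    rw [Finset.nonempty_iff_ne_empty]
    intro h0
    rw [Finset.erase_eq_empty_iff] at h0
    rcases h0 with h0 | h0
    · simp [h0] at hv
    · exact hne h0
  obtain ⟨x, hx, hmax⟩ := Finset.exists_max_image (H.erase v) f hne'
  rw [Finset.mem_erase] at hx
  refine ⟨x, hx.2, Finset.mem_erase.2 ⟨fun h => hx.1 h.symm, hv⟩,
    fun u hu => hr u (Finset.mem_of_mem_erase hu), ?_⟩
  intro u hu huv
  rw [Finset.mem_erase] at hu
  obtain ⟨w, hw, hadj, hlt⟩ := hp u hu.2 huv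
  refine ⟨w, Finset.mem_erase.2 ⟨?_, hw⟩, hadj, hlt⟩
  rintro rfl
  have := hmax u (Finset.mem_erase.2 ⟨huv, hu.2⟩)
  omega

/-- Growing by one layer inside `W`. -/
lemma rooted_grow {V : Type} [Fintype V] [DecidableEq V] (G : SimpleGraph V) (v : V)
    (H W : Finset V) (f : V → ℕ) (r : ℕ) (h : Rooted G v H f r) :
    ∃ f', Rooted G v (H ∪ (nb G H ∩ W)) f' (r + 1) := by
  obtain ⟨hv, hr, hp⟩ := h
  refine ⟨fun u => if u ∈ H then f u else r + 1, Finset.mem_union_left _ hv, ?_, ?_⟩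
  · intro u _
    dsimp only
    split_ifs with hu
    · exact (hr u hu).trans (Nat.le_succ r)
    · exact le_rfl
  · intro u hu huv
    by_cases huH : u ∈ H
    · obtain ⟨w, hw, hadj, hlt⟩ := hp u huH huv
      exact ⟨w, Finset.mem_union_left _ hw, hadj, by simp [hw, huH, hlt]⟩
    · have hu2 : u ∈ nb G H := by
        rcases Finset.mem_union.1 hu with h | h
        · exact absurd h huH
        · exact (Finset.mem_inter.1 h).1
      obtain ⟨w, hw, hadj⟩ := (mem_nb G H u).1 hu2
      refine ⟨w, Finset.mem_union_left _ hw, hadj, ?_⟩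
      have := hr w hw
      simp [hw, huH]; omega

lemma nb_mono {V : Type} [Fintype V] (G : SimpleGraph V) {A B : Finset V} (h : A ⊆ B) :
    nb G A ⊆ nb G B := by
  intro x hx
  rw [mem_nb] at *
  obtain ⟨a, ha, hadj⟩ := hx
  exact ⟨a, h ha, hadj⟩

/-- Expansion: a large set contains a rooted set of depth `k` and size at least `s`. -/
lemma grow_heart {V : Type} [Fintype V] [DecidableEq V] (G : SimpleGraph V) (k : ℕ)
    (e s M : ℝ) (he : 0 < e) (hs : 0 < s) (hsM : s * M = e) (hM : 1 ≤ M) (hMk : s ≤ M ^ k)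
    (hcoh : ∀ A B : Finset V, Disjoint A B → Anticomplete G A B → s ≤ (A.card : ℝ) →
      (B.card : ℝ) < e)
    (W : Finset V) (hW : 6 * e ≤ (W.card : ℝ)) :
    ∃ v H f, H ⊆ W ∧ Rooted G v H f k ∧ s ≤ (H.card : ℝ) := by
  let cl : Finset V → Finset V := fun A => A ∪ (nb G A ∩ W)
  have hse : s ≤ e := by nlinarith
  let P : Finset (Finset V) := by
    classical
    exact W.powerset.filter (fun A => (A.card : ℝ) ≤ 2 * s ∧ ((cl A).card : ℝ) ≤ M * A.card)
  have hPmem : ∀ A, A ∈ P ↔ A ⊆ W ∧ (A.card : ℝ) ≤ 2 * s ∧ ((cl A).card : ℝ) ≤ M * A.card := by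
    intro A; simp [P]
  have hPne : P.Nonempty := ⟨∅, by
    rw [hPmem]
    refine ⟨by simp, by simp; exact hs.le, ?_⟩
    have : cl ∅ = ∅ := by
      ext x; simp [cl, mem_nb]
    simp [this]⟩
  obtain ⟨A, hAP, hAmax⟩ := Finset.exists_max_image P Finset.card hPne
  obtain ⟨hAW, hA2, hAcl⟩ := (hPmem A).1 hAP
  have hAs : (A.card : ℝ) < s := by
    by_contra hcon
    push Not at hcon
    have h1 := hcoh A (W \ cl A) ?_ ?_ hcon
    · have h2 : (W.card : ℝ) ≤ (W \ cl A).card + (cl A).card := by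
        have := Finset.card_le_card_sdiff_add_card (s := W) (t := cl A)
        exact_mod_cast this
      have : M * A.card ≤ M * (2 * s) := by gcongr
      nlinarith
    · rw [Finset.disjoint_left]
      intro x hx hx2
      exact (Finset.mem_sdiff.1 hx2).2 (Finset.mem_union_left _ hx)
    · intro a ha b hb hadj
      rw [Finset.mem_sdiff] at hb
      exact hb.2 (Finset.mem_union_right _ (Finset.mem_inter.2 ⟨(mem_nb _ _ _).2 ⟨a, ha, hadj⟩, hb.1⟩))
  have hex : ∃ v ∈ W, v ∉ A := by
    by_contra hcon
    push Not at hcon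
    have : (W.card : ℝ) ≤ A.card := by exact_mod_cast Finset.card_le_card hcon
    linarith
  obtain ⟨v, hvW, hvA⟩ := hex
  have key : ∀ r : ℕ, ∃ H f, H ⊆ W ∧ Rooted G v H f r ∧
      (s ≤ ((H \ A).card : ℝ) ∨ M ^ r ≤ ((H \ A).card : ℝ)) := by
    intro r
    induction r with
    | zero =>
      refine ⟨{v}, fun _ => 0, by simpa using hvW, ⟨by simp, by simp, ?_⟩, Or.inr ?_⟩
      · intro u hu huv
        exact absurd (Finset.mem_singleton.1 hu) huv
      · have : ({v} : Finset V) \ A = {v} := by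
          ext x; simp; rintro rfl; exact hvA
        simp [this]
    | succ r ih =>
      obtain ⟨H, f, hHW, hroot, hsz⟩ := ih
      obtain ⟨f', hf'⟩ := rooted_grow G v H W f r hroot
      refine ⟨cl H, f', ?_, hf', ?_⟩
      · exact Finset.union_subset hHW Finset.inter_subset_right
      have hmono : ((H \ A).card : ℝ) ≤ ((cl H \ A).card : ℝ) := by
        exact_mod_cast Finset.card_le_card (Finset.sdiff_subset_sdiff Finset.subset_union_left le_rfl)
      by_cases hD : s ≤ ((H \ A).card : ℝ)
      · exact Or.inl (hD.trans hmono)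
      have hsz' := hsz.resolve_left hD
      push Not at hD
      right
      have hdis : Disjoint A (H \ A) := Finset.disjoint_sdiff
      have hcard : (A ∪ (H \ A)).card = A.card + (H \ A).card := Finset.card_union_of_disjoint hdis
      have hDpos : 0 < (H \ A).card :=
        Finset.card_pos.2 ⟨v, Finset.mem_sdiff.2 ⟨hroot.1, hvA⟩⟩
      have hnot : A ∪ (H \ A) ∉ P := by
        intro hmem
        have := hAmax _ hmem
        omega
      rw [hPmem] at hnot
      have hexp : M * ((A ∪ (H \ A)).card : ℝ) < ((cl (A ∪ (H \ A))).card : ℝ) := by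
        by_contra hcon
        push Not at hcon
        refine hnot ⟨Finset.union_subset hAW (Finset.sdiff_subset.trans hHW), ?_, hcon⟩
        rw [hcard]; push_cast; linarith
      have hsub : cl (A ∪ (H \ A)) ⊆ cl A ∪ (cl H \ A) := by
        intro x hx
        by_cases hxA : x ∈ A
        · exact Finset.mem_union_left _ (Finset.mem_union_left _ hxA)
        rcases Finset.mem_union.1 hx with h | h
        · rcases Finset.mem_union.1 h with h | h
          · exact absurd h hxA
          · exact Finset.mem_union_right _ (Finset.mem_sdiff.2
              ⟨Finset.mem_union_left _ (Finset.mem_sdiff.1 h).1, hxA⟩)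
        · obtain ⟨h1, h2⟩ := Finset.mem_inter.1 h
          obtain ⟨y, hy, hadj⟩ := (mem_nb _ _ _).1 h1
          rcases Finset.mem_union.1 hy with hy | hy
          · exact Finset.mem_union_left _ (Finset.mem_union_right _
              (Finset.mem_inter.2 ⟨(mem_nb _ _ _).2 ⟨y, hy, hadj⟩, h2⟩))
          · exact Finset.mem_union_right _ (Finset.mem_sdiff.2 ⟨Finset.mem_union_right _
              (Finset.mem_inter.2 ⟨(mem_nb _ _ _).2 ⟨y, (Finset.mem_sdiff.1 hy).1, hadj⟩, h2⟩), hxA⟩)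
      have hle : ((cl (A ∪ (H \ A))).card : ℝ) ≤ (cl A).card + (cl H \ A).card := by
        exact_mod_cast (Finset.card_le_card hsub).trans (Finset.card_union_le _ _)
      rw [hcard] at hexp
      push_cast at hexp
      have : M ^ (r + 1) ≤ M * (H \ A).card := by
        rw [pow_succ, mul_comm]; gcongr
      linarith [mul_add M (A.card : ℝ) ((H \ A).card : ℝ)]
  obtain ⟨H, f, hHW, hroot, hsz⟩ := key k
  refine ⟨v, H, f, hHW, hroot, ?_⟩
  have h1 : s ≤ ((H \ A).card : ℝ) := by
    rcases hsz with h | h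
    · exact h
    · exact hMk.trans h
  have h2 : ((H \ A).card : ℝ) ≤ H.card := by
    exact_mod_cast Finset.card_le_card Finset.sdiff_subset
  exact h1.trans h2

lemma nb_split {V : Type} [Fintype V] [DecidableEq V] (G : SimpleGraph V) (H : Finset V) (x : V) :
    nb G H ⊆ nb G (H.erase x) ∪ nb G {x} := by
  intro y hy
  obtain ⟨h, hh, hadj⟩ := (mem_nb _ _ _).1 hy
  by_cases hx : h = x
  · subst hx
    exact Finset.mem_union_right _ ((mem_nb _ _ _).2 ⟨h, by simp, hadj⟩)
  · exact Finset.mem_union_left _ ((mem_nb _ _ _).2 ⟨h, Finset.mem_erase.2 ⟨hx, hh⟩, hadj⟩)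

/-- A heart inside `U` that dominates half of some `W i` and not much more of any of them. -/
lemma half_heart {V ι : Type} [Fintype V] [DecidableEq V] (G : SimpleGraph V) (k : ℕ)
    (e s : ℝ) (he : 0 < e)
    (hgrow : ∀ W : Finset V, 6 * e ≤ (W.card : ℝ) →
      ∃ v H f, H ⊆ W ∧ Rooted G v H f k ∧ s ≤ (H.card : ℝ))
    (hcoh : ∀ A B : Finset V, Disjoint A B → Anticomplete G A B → s ≤ (A.card : ℝ) →
      (B.card : ℝ) < e)
    (hdeg : ∀ v, ((nb G {v}).card : ℝ) < e)
    (U : Finset V) (hU : 6 * e ≤ (U.card : ℝ)) (J : Finset ι) (hJ : J.Nonempty)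
    (W : ι → Finset V) (hW : ∀ i ∈ J, 6 * e ≤ ((W i).card : ℝ))
    (hdis : ∀ i ∈ J, Disjoint U (W i)) :
    ∃ v H f, H ⊆ U ∧ Rooted G v H f k ∧
      (∃ i ∈ J, ((W i).card : ℝ) ≤ 2 * ((W i ∩ nb G H).card : ℝ)) ∧
      ∀ i ∈ J, 2 * ((W i ∩ nb G H).card : ℝ) ≤ (W i).card + 2 * e := by
  let Q : Finset V → Prop := fun H => H ⊆ U ∧ (∃ v f, Rooted G v H f k) ∧
      (∃ i ∈ J, ((W i).card : ℝ) ≤ 2 * ((W i ∩ nb G H).card : ℝ))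
  let P : Finset (Finset V) := by
    classical
    exact Finset.univ.filter Q
  have hPmem : ∀ A, A ∈ P ↔ Q A := by
    intro A; simp [P]
  have hPne : P.Nonempty := by
    obtain ⟨v, H, f, hHU, hroot, hsH⟩ := hgrow U hU
    obtain ⟨i, hi⟩ := hJ
    refine ⟨H, (hPmem H).2 ⟨hHU, ⟨v, f, hroot⟩, i, hi, ?_⟩⟩
    have h1 := hcoh H (W i \ nb G H) ?_ ?_ hsH
    · have h2 : ((W i ∩ nb G H).card : ℝ) + (W i \ nb G H).card = (W i).card := by
        exact_mod_cast Finset.card_inter_add_card_sdiff (W i) (nb G H)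
      have := hW i hi
      linarith
    · exact Finset.disjoint_of_subset_left hHU
        (Finset.disjoint_of_subset_right Finset.sdiff_subset (hdis i hi))
    · intro a ha b hb hadj
      exact (Finset.mem_sdiff.1 hb).2 ((mem_nb _ _ _).2 ⟨a, ha, hadj⟩)
  obtain ⟨H, hHP, hmin⟩ := Finset.exists_min_image P Finset.card hPne
  obtain ⟨hHU, ⟨v, f, hroot⟩, hhalf⟩ := (hPmem H).1 hHP
  refine ⟨v, H, f, hHU, hroot, hhalf, ?_⟩
  intro i hi
  by_cases hHv : H = {v}
  · have h1 := hdeg v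
    rw [← hHv] at h1
    have h2 : ((W i ∩ nb G H).card : ℝ) ≤ (nb G H).card := by
      exact_mod_cast Finset.card_le_card Finset.inter_subset_right
    have := hW i hi
    linarith
  · obtain ⟨x, hx, hroot'⟩ := rooted_erase G v H f k hroot hHv
    have hlt : 2 * ((W i ∩ nb G (H.erase x)).card : ℝ) < (W i).card := by
      by_contra hcon
      push Not at hcon
      have := hmin (H.erase x) ((hPmem _).2
        ⟨(Finset.erase_subset _ _).trans hHU, ⟨v, f, hroot'⟩, i, hi, hcon⟩)
      have := Finset.card_erase_lt_of_mem hx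
      omega
    have hsub : W i ∩ nb G H ⊆ (W i ∩ nb G (H.erase x)) ∪ nb G {x} := by
      intro y hy
      rw [Finset.mem_inter] at hy
      rcases Finset.mem_union.1 (nb_split G H x hy.2) with h | h
      · exact Finset.mem_union_left _ (Finset.mem_inter.2 ⟨hy.1, h⟩)
      · exact Finset.mem_union_right _ h
    have h3 : ((W i ∩ nb G H).card : ℝ) ≤ (W i ∩ nb G (H.erase x)).card + (nb G {x}).card := by
      exact_mod_cast (Finset.card_le_card hsub).trans (Finset.card_union_le _ _)
    have := hdeg x
    linarith

/-- The merging induction. -/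
lemma merge_ind {V ι : Type} [Fintype V] [DecidableEq V] [DecidableEq ι]
    (G : SimpleGraph V) (k : ℕ)
    (e s : ℝ) (he : 0 < e)
    (hgrow : ∀ W : Finset V, 6 * e ≤ (W.card : ℝ) →
      ∃ v H f, H ⊆ W ∧ Rooted G v H f k ∧ s ≤ (H.card : ℝ))
    (hcoh : ∀ A B : Finset V, Disjoint A B → Anticomplete G A B → s ≤ (A.card : ℝ) →
      (B.card : ℝ) < e)
    (hdeg : ∀ v, ((nb G {v}).card : ℝ) < e) (n : ℕ) :
    ∀ (q : ℕ) (I : Finset ι) (F : ι → Finset (Finset V)) (W : ι → Finset V),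
      I.card = q + 1 →
      2 ^ n ≤ ∑ i ∈ I, 2 ^ (F i).card →
      (∀ i ∈ I, ((2 : ℝ) ^ (q + 2) - 2) * e ≤ ((W i).card : ℝ)) →
      (∀ i ∈ I, ∀ j ∈ I, i ≠ j → Disjoint (W i) (W j)) →
      (∀ i ∈ I, ∀ H ∈ F i, ∃ v f, Rooted G v H f k) →
      (∀ i ∈ I, ∀ H ∈ F i, ∀ H' ∈ F i, H ≠ H' → Disjoint H H' ∧ Anticomplete G H H') →
      (∀ i ∈ I, ∀ H ∈ F i, ∀ j ∈ I, Disjoint H (W j)) →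
      (∀ i ∈ I, ∀ H ∈ F i, W i ⊆ nb G H) →
      (∀ i ∈ I, ∀ H ∈ F i, ∀ j ∈ I, j ≠ i → Disjoint (nb G H) (W j)) →
      ∃ (S : Finset (Finset V)) (B : Finset V), n ≤ S.card ∧ 2 * e ≤ (B.card : ℝ) ∧
        (∀ H ∈ S, ∃ v f, Rooted G v H f k) ∧
        (∀ H ∈ S, ∀ H' ∈ S, H ≠ H' → Disjoint H H' ∧ Anticomplete G H H') ∧
        (∀ H ∈ S, Disjoint H B) ∧ (∀ H ∈ S, B ⊆ nb G H) := by
  intro q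
  induction q with
  | zero =>
    intro I F W hI hpot hW _ hF hFF hFW hcov _
    obtain ⟨i, rfl⟩ := Finset.card_eq_one.1 hI
    have hi : i ∈ ({i} : Finset ι) := by simp
    refine ⟨F i, W i, ?_, ?_, hF i hi, hFF i hi, fun H hH => hFW i hi H hH i hi, hcov i hi⟩
    · simp only [Finset.sum_singleton] at hpot
      exact (Nat.pow_le_pow_iff_right (by norm_num)).1 hpot
    · have := hW i hi
      norm_num at this
      exact this
  | succ q ih =>
    intro I F W hI hpot hW hWd hF hFF hFW hcov hanti
    have hIne : I.Nonempty := Finset.card_pos.1 (by omega)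
    obtain ⟨j, hj, hjmin⟩ := Finset.exists_min_image I (fun i => (F i).card) hIne
    have hJcard : (I.erase j).card = q + 1 := by
      rw [Finset.card_erase_of_mem hj]; omega
    have hJne : (I.erase j).Nonempty := Finset.card_pos.1 (by omega)
    have hJI : ∀ i ∈ I.erase j, i ∈ I := fun i hi => Finset.mem_of_mem_erase hi
    have hW6 : ∀ i ∈ I, 6 * e ≤ ((W i).card : ℝ) := by
      intro i hi
      refine le_trans ?_ (hW i hi)
      have h8 : (2 : ℝ) ^ 3 ≤ 2 ^ (q + 1 + 2) := pow_le_pow_right₀ (by norm_num) (by omega)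
      have : (6 : ℝ) ≤ 2 ^ (q + 1 + 2) - 2 := by norm_num at h8 ⊢; linarith
      gcongr
    obtain ⟨v, H, f, hHU, hroot, ⟨i, hi, hhalf⟩, hup⟩ :=
      half_heart G k e s he hgrow hcoh hdeg (W j) (hW6 j hj) (I.erase j) hJne W
        (fun l hl => hW6 l (hJI l hl))
        (fun l hl => hWd j hj l (hJI l hl) (Finset.ne_of_mem_erase hl).symm)
    have hiI := hJI i hi
    have hij : i ≠ j := Finset.ne_of_mem_erase hi
    have hHn : H ∉ F i := by
      intro hmem
      have := hFW i hiI H hmem j hj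
      exact (Finset.disjoint_left.1 this) hroot.1 (hHU hroot.1)
    have hHdisj : ∀ l ∈ I.erase j, Disjoint H (W l) := fun l hl =>
      Finset.disjoint_of_subset_left hHU
        (hWd j hj l (hJI l hl) (Finset.ne_of_mem_erase hl).symm)
    let F' : ι → Finset (Finset V) := fun l => if l = i then insert H (F i) else F l
    let W' : ι → Finset V := fun l => if l = i then W i ∩ nb G H else W l \ nb G H
    have hF'i : F' i = insert H (F i) := by simp [F']
    have hW'i : W' i = W i ∩ nb G H := by simp [W']
    have hF'l : ∀ l, l ≠ i → F' l = F l := fun l hl => by simp [F', hl]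
    have hW'l : ∀ l, l ≠ i → W' l = W l \ nb G H := fun l hl => by simp [W', hl]
    have hW'sub : ∀ l, W' l ⊆ W l := by
      intro l
      by_cases hl : l = i
      · subst hl; rw [hW'i]; exact Finset.inter_subset_left
      · rw [hW'l l hl]; exact Finset.sdiff_subset
    have hF'mem : ∀ l, ∀ K ∈ F' l, (l = i ∧ K = H) ∨ K ∈ F l := by
      intro l K hK
      by_cases hl : l = i
      · subst hl
        rw [hF'i, Finset.mem_insert] at hK
        tauto
      · rw [hF'l l hl] at hK; exact Or.inr hK
    -- anticompleteness of the new heart and the old ones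
    have hnew : ∀ K ∈ F i, Disjoint H K ∧ Anticomplete G H K := by
      intro K hK
      refine ⟨Finset.disjoint_of_subset_left hHU (hFW i hiI K hK j hj).symm, ?_⟩
      intro a ha b hb hadj
      exact (Finset.disjoint_left.1 (hanti i hiI K hK j hj hij.symm))
        ((mem_nb _ _ _).2 ⟨b, hb, hadj.symm⟩) (hHU ha)
    refine ih (I.erase j) F' W' hJcard ?_ ?_ ?_ ?_ ?_ ?_ ?_ ?_
    · refine hpot.trans ?_
      rw [← Finset.add_sum_erase I _ hj, ← Finset.add_sum_erase (I.erase j) _ hi,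
        ← Finset.add_sum_erase (I.erase j) (fun l => 2 ^ (F' l).card) hi]
      have h1 : ∑ l ∈ (I.erase j).erase i, 2 ^ (F' l).card
          = ∑ l ∈ (I.erase j).erase i, 2 ^ (F l).card := by
        refine Finset.sum_congr rfl fun l hl => ?_
        rw [hF'l l (Finset.ne_of_mem_erase hl)]
      have h2 : (2 : ℕ) ^ (F j).card ≤ 2 ^ (F i).card :=
        Nat.pow_le_pow_right (by norm_num) (hjmin i hiI)
      rw [h1, hF'i, Finset.card_insert_of_notMem hHn, pow_succ]
      omega
    · intro l hl
      have hWl := hW l (hJI l hl)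
      have hpw : (2 : ℝ) ^ (q + 1 + 2) = 2 * 2 ^ (q + 2) := by ring
      rw [hpw] at hWl
      by_cases hli : l = i
      · subst hli
        rw [hW'i]
        nlinarith
      · rw [hW'l l hli]
        have h2 : ((W l ∩ nb G H).card : ℝ) + (W l \ nb G H).card = (W l).card := by
          exact_mod_cast Finset.card_inter_add_card_sdiff (W l) (nb G H)
        have := hup l hl
        nlinarith
    · intro a ha b hb hab
      exact Finset.disjoint_of_subset_left (hW'sub a)
        (Finset.disjoint_of_subset_right (hW'sub b) (hWd a (hJI a ha) b (hJI b hb) hab))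
    · intro l hl K hK
      rcases hF'mem l K hK with ⟨_, rfl⟩ | h
      · exact ⟨v, f, hroot⟩
      · exact hF l (hJI l hl) K h
    · intro l hl K hK K' hK' hne
      rcases hF'mem l K hK with ⟨rfl, rfl⟩ | h
      · rcases hF'mem l K' hK' with ⟨_, rfl⟩ | h'
        · exact absurd rfl hne
        · exact hnew K' h'
      · rcases hF'mem l K' hK' with ⟨rfl, rfl⟩ | h'
        · obtain ⟨h1, h2⟩ := hnew K h
          exact ⟨h1.symm, fun a ha b hb hadj => h2 b hb a ha hadj.symm⟩
        · exact hFF l (hJI l hl) K h K' h' hne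
    · intro l hl K hK m hm
      refine Finset.disjoint_of_subset_right (hW'sub m) ?_
      rcases hF'mem l K hK with ⟨_, rfl⟩ | h
      · exact hHdisj m hm
      · exact hFW l (hJI l hl) K h m (hJI m hm)
    · intro l hl K hK
      rcases hF'mem l K hK with ⟨rfl, rfl⟩ | h
      · rw [hW'i]; exact Finset.inter_subset_right
      · exact (hW'sub l).trans (hcov l (hJI l hl) K h)
    · intro l hl K hK m hm hml
      rcases hF'mem l K hK with ⟨rfl, rfl⟩ | h
      · rw [hW'l m hml]; exact Finset.disjoint_sdiff
      · exact Finset.disjoint_of_subset_right (hW'sub m)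
          (hanti l (hJI l hl) K h m (hJI m hm) hml)

lemma pow_bound (n : ℕ) (hn : 1 ≤ n) : 2 ^ n + n + 1 ≤ 2 ^ (2 * n) := by
  have h : n + 1 ≤ 2 ^ n := Nat.lt_two_pow_self
  have h2 : 2 ^ 1 ≤ 2 ^ n := Nat.pow_le_pow_right (by norm_num) hn
  rw [two_mul, pow_add]
  nlinarith

/-- existence of a spider of length n, height at most 2 + 2/c,
with mass at least ε|G|. -/
theorem stmt_7 {V : Type} [Fintype V] [DecidableEq V] (G : SimpleGraph V) [DecidableRel G.Adj]
    (c : ℝ) (n : ℕ) (ε : ℝ) (hc : 0 < c) (hci : ∃ k : ℕ, (k : ℝ) * c = 1) (hn : 1 ≤ n)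
    (hε : ε = ((2 : ℝ) ^ ((2 : ℕ) ^ (2 * n)))⁻¹) (hV : 2 ≤ Fintype.card V)
    (hsparse : ∀ v : V, (G.degree v : ℝ) < ε * Fintype.card V)
    (hcoherent : ¬ ∃ A B : Finset V, Disjoint A B ∧ Anticomplete G A B ∧
      ε * (Fintype.card V : ℝ) ^ (1 - c) ≤ (A.card : ℝ) ∧
      ε * Fintype.card V ≤ (B.card : ℝ)) :
    ∃ (a : V) (H B : Fin n → Finset V),
      (∀ i, IsCovering G a (H i) (B i)) ∧
      (∀ i, HeightLE G a (H i) (2 + 2 / c)) ∧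
      (∀ i, ε * Fintype.card V ≤ ((B i).card : ℝ)) ∧
      (∀ i j, i ≠ j → Disjoint ((H i).erase a) ((H j).erase a) ∧
        Anticomplete G ((H i).erase a) ((H j).erase a)) := by
  obtain ⟨k, hk⟩ := hci
  set N : ℝ := (Fintype.card V : ℝ) with hN
  have hN2 : (2 : ℝ) ≤ N := by rw [hN]; exact_mod_cast hV
  have hN0 : 0 < N := by linarith
  have hεpos : 0 < ε := by rw [hε]; positivity
  have hε1 : ε ≤ 1 := by
    rw [hε]; exact inv_le_one_of_one_le₀ (one_le_pow₀ (by norm_num))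
  set e : ℝ := ε * N with he
  have hepos : 0 < e := by positivity
  set s : ℝ := ε * N ^ (1 - c) with hs
  have hspos : 0 < s := by positivity
  have hsM : s * N ^ c = e := by
    rw [hs, he, mul_assoc, ← Real.rpow_add hN0]; simp
  have hM : 1 ≤ N ^ c := Real.one_le_rpow (by linarith) hc.le
  have hse : s ≤ e := by nlinarith
  have hMk : s ≤ (N ^ c) ^ k := by
    rw [← Real.rpow_natCast, ← Real.rpow_mul hN0.le, mul_comm, hk, Real.rpow_one]
    nlinarith
  have hcoh : ∀ A B : Finset V, Disjoint A B → Anticomplete G A B → s ≤ (A.card : ℝ) →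
      (B.card : ℝ) < e := by
    intro A B h1 h2 h3
    by_contra hcon
    push Not at hcon
    exact hcoherent ⟨A, B, h1, h2, h3, hcon⟩
  have hdeg : ∀ v, ((nb G {v}).card : ℝ) < e := by
    intro v
    have : nb G {v} = G.neighborFinset v := by
      ext x; simp [mem_nb]
    rw [this]
    exact hsparse v
  have he1 : 1 < e := by
    by_contra hcon
    push Not at hcon
    obtain ⟨u, w, huw⟩ := Fintype.exists_pair_of_one_lt_card (α := V) (by omega)
    have := hcoh {u} {w} (by simpa using huw) ?_ (by simp; linarith)
    · simp at this; linarith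
    · intro a ha b hb hadj
      have h1 := hdeg a
      have h2 : 0 < (nb G {a}).card := Finset.card_pos.2 ⟨b, (mem_nb _ _ _).2 ⟨a, by simp, hadj⟩⟩
      have h3 : (1 : ℝ) ≤ (nb G {a}).card := by exact_mod_cast h2
      linarith
  have hgrow := grow_heart G k e s (N ^ c) hepos hspos hsM hM hMk hcoh
  -- initial partition
  obtain ⟨m, hm⟩ : ∃ m, m = Fintype.card V / 2 ^ n := ⟨_, rfl⟩
  obtain ⟨g⟩ : Nonempty (Fin (2 ^ n) × Fin m ↪ V) := by
    apply Function.Embedding.nonempty_of_card_le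
    simp only [Fintype.card_prod, Fintype.card_fin]
    rw [hm]; exact Nat.mul_div_le _ _
  let W : Fin (2 ^ n) → Finset V := fun i => Finset.univ.image (fun t : Fin m => g (i, t))
  have hWcard : ∀ i, (W i).card = m := by
    intro i
    rw [Finset.card_image_of_injective]
    · simp
    · intro x y hxy
      have := g.injective hxy
      simpa using this
  have hmbound : ((2 : ℝ) ^ (2 ^ n + 1) - 2) * e ≤ m := by
    have h1 : (N : ℝ) < 2 ^ n * (m + 1) := by
      rw [hN, hm]
      have := Nat.lt_mul_div_succ (Fintype.card V) (b := 2 ^ n) (by positivity)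
      exact_mod_cast this
    have h2 : (2 : ℝ) ^ (2 ^ n + 1) * ε * 2 ^ n ≤ 1 := by
      rw [hε, mul_assoc, mul_comm _ ((2 : ℝ) ^ n), ← mul_assoc, ← pow_add, ← div_eq_mul_inv]
      apply div_le_one_of_le₀ _ (by positivity)
      apply pow_le_pow_right₀ (by norm_num)
      have := pow_bound n hn
      omega
    have h3 : (2 : ℝ) ^ (2 ^ n + 1) * e ≤ m + 1 := by
      have hp : (0 : ℝ) < 2 ^ n := by positivity
      have h4 : (2 : ℝ) ^ (2 ^ n + 1) * e * 2 ^ n ≤ (m + 1) * 2 ^ n := by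
        calc (2 : ℝ) ^ (2 ^ n + 1) * e * 2 ^ n = ((2 : ℝ) ^ (2 ^ n + 1) * ε * 2 ^ n) * N := by
              rw [he]; ring
          _ ≤ 1 * N := by gcongr
          _ ≤ (m + 1) * 2 ^ n := by linarith
      exact le_of_mul_le_mul_right h4 hp
    linarith [sub_mul ((2 : ℝ) ^ (2 ^ n + 1)) 2 e]
  have hq : 2 ^ n - 1 + 1 = 2 ^ n := Nat.sub_add_cancel Nat.one_le_two_pow
  obtain ⟨S, B, hScard, hBcard, hSroot, hSS, hSB, hScov⟩ :=
    merge_ind G k e s hepos hgrow hcoh hdeg n (2 ^ n - 1) Finset.univ (fun _ => ∅) W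
      (by simp [hq]) (by simp) (by
        intro i _
        rw [hWcard, show 2 ^ n - 1 + 2 = 2 ^ n + 1 by omega]
        exact hmbound) (by
        intro i _ j _ hij
        rw [Finset.disjoint_left]
        intro x hx hy
        simp only [W, Finset.mem_image, Finset.mem_univ, true_and] at hx hy
        obtain ⟨t, rfl⟩ := hx
        obtain ⟨t', ht'⟩ := hy
        have := g.injective ht'
        simp at this
        exact hij this.1.symm) (by simp) (by simp) (by simp) (by simp) (by simp)
  have hBne : B.Nonempty := by
    rw [← Finset.card_pos]
    have : (0 : ℝ) < B.card := by linarith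
    exact_mod_cast this
  obtain ⟨a, ha⟩ := hBne
  obtain ⟨g'⟩ : Nonempty (Fin n ↪ S) := by
    apply Function.Embedding.nonempty_of_card_le
    simpa using hScard
  have hwalk : ∀ i : Fin n, ∀ u ∈ insert a (g' i).1, ∃ p : G.Walk a u,
      (∀ x ∈ p.support, x ∈ insert a (g' i).1) ∧ p.length ≤ 2 * k + 1 := by
    intro i u hu
    rcases Finset.mem_insert.1 hu with rfl | hu
    · exact ⟨SimpleGraph.Walk.nil, by simp, by simp⟩
    obtain ⟨h, hh, hadj⟩ := (mem_nb _ _ _).1 (hScov _ (g' i).2 ha)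
    obtain ⟨v, f, hroot⟩ := hSroot _ (g' i).2
    obtain ⟨p, hp1, hp2⟩ := rooted_walk G v _ f k hroot h hh
    obtain ⟨p', hp1', hp2'⟩ := rooted_walk G v _ f k hroot u hu
    refine ⟨SimpleGraph.Walk.cons hadj.symm (p.reverse.append p'), ?_, ?_⟩
    · intro x hx
      rw [SimpleGraph.Walk.support_cons, List.mem_cons, SimpleGraph.Walk.mem_support_append_iff,
        SimpleGraph.Walk.support_reverse, List.mem_reverse] at hx
      rcases hx with rfl | hx | hx
      · simp
      · exact Finset.mem_insert_of_mem (hp1 x hx)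
      · exact Finset.mem_insert_of_mem (hp1' x hx)
    · simp only [SimpleGraph.Walk.length_cons, SimpleGraph.Walk.length_append,
        SimpleGraph.Walk.length_reverse]
      omega
  have haS : ∀ i : Fin n, a ∉ (g' i).1 := fun i h =>
    (Finset.disjoint_left.1 (hSB _ (g' i).2)) h ha
  refine ⟨a, fun i => insert a (g' i).1, fun _ => B.erase a, ?_, ?_, ?_, ?_⟩
  · intro i
    refine ⟨?_, Finset.mem_insert_self _ _, ?_, ?_⟩
    · rw [Finset.disjoint_left]
      intro x hx hxB
      rw [Finset.mem_erase] at hxB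
      rcases Finset.mem_insert.1 hx with h | h
      · exact hxB.1 h
      · exact (Finset.disjoint_left.1 (hSB _ (g' i).2)) h hxB.2
    · rw [SimpleGraph.connected_iff_exists_forall_reachable]
      refine ⟨⟨a, by simp⟩, ?_⟩
      rintro ⟨u, hu⟩
      obtain ⟨p, hp, _⟩ := hwalk i u (by simpa using hu)
      exact ⟨p.induce _ (fun x hx => by simpa using hp x hx)⟩
    · intro b hb
      obtain ⟨h, hh, hadj⟩ := (mem_nb _ _ _).1 (hScov _ (g' i).2 (Finset.mem_of_mem_erase hb))
      exact ⟨h, Finset.mem_insert_of_mem hh, hadj⟩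
  · intro i u hu
    obtain ⟨p, hp, hlen⟩ := hwalk i u hu
    refine ⟨p.bypass, p.bypass_isPath, fun x hx => hp x (p.support_bypass_subset hx), ?_⟩
    have h1 : (p.bypass.length : ℝ) ≤ 2 * k + 1 := by
      exact_mod_cast (p.length_bypass_le).trans hlen
    have h2 : 2 / c = 2 * k := by
      rw [div_eq_iff hc.ne']; linarith
    rw [h2]; linarith
  · intro i
    have h1 : (B.card : ℝ) = (B.erase a).card + 1 := by
      exact_mod_cast (Finset.card_erase_add_one ha).symm
    linarith
  · intro i j hij
    dsimp only
    rw [Finset.erase_insert (haS i), Finset.erase_insert (haS j)]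
    refine hSS _ (g' i).2 _ (g' j).2 ?_
    intro h
    exact hij (g'.injective (Subtype.ext h))
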